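/- For |q|<1, H(q^2)^2/(G(q)^2·H(q)) = H(q^5)·G(q^{10})^2 − 2q·G(q^5)·G(q^{10})·H(q^{10}) + q^3·G(q^5)·H(q^{10})^2 + q^4·H(q^5)·H(q^{10})^2. -/

import Mathlib

/-! Write `[x] = (x, q¹⁰/x; q¹⁰)_∞`. Splitting products modulo 10, the left-hand side is
`[q]² [q²] [q³]`, and the proof is a 5-dissection of `([q][q³]) ([q²][q])`.

By the Jacobi triple product (`triple_product`, obtained from the finite `q`-binomial theorem by
dominated convergence), `(q¹⁰; q¹⁰)² [x][y]` is a double theta series with quadratic form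
`5 (m² + n²)`. Along the cosets of the index-5 lattice spanned by `(2, 1)` and `(-1, 2)` this form is
`25 (k² + l²)`, so the series splits into five products of theta series of base `q⁵⁰`
(`dissection`). These theta series are, up to powers of `q`, the functions
`A, B, C, E, F = f(-q^j, -q^(50-j))` with `j = 5, 10, 15, 20, 25`, in which all terms on the right-hand
side are monomials: for instance `G(q⁵) = D² / (A E)` and `(q¹⁰; q¹⁰) = B E / D` with
`D = (q⁵⁰; q⁵⁰)`.

Multiplying the two dissections, the terms with exponent 2 modulo 5 cancel, and the other four
classes are evaluated by three instances of Weierstrass's three-term theta relation (`three_term`).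
That relation holds because a product of two theta series has the form `α(x) β(y) - β(x) α(y)`
(`weierstrass`), whence it is a Plücker relation.
-/

noncomputable def qp (a q : ℂ) : ℂ := ∏' k : ℕ, (1 - a * q ^ k)

noncomputable def GG (q : ℂ) : ℂ := 1 / (qp q (q ^ 5) * qp (q ^ 4) (q ^ 5))

noncomputable def HH (q : ℂ) : ℂ := 1 / (qp (q ^ 2) (q ^ 5) * qp (q ^ 3) (q ^ 5))

noncomputable def RR (q : ℂ) : ℂ :=
  (qp q (q ^ 5) * qp (q ^ 4) (q ^ 5)) / (qp (q ^ 2) (q ^ 5) * qp (q ^ 3) (q ^ 5))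

noncomputable def phi (q : ℂ) : ℂ := ∑' n : ℤ, q ^ (n.natAbs ^ 2)

noncomputable def psi (q : ℂ) : ℂ := ∑' n : ℕ, q ^ (n * (n + 1) / 2)

open Filter Topology

/-! ### Theta series -/

/-- The general term `ε ^ n * q ^ (s n² + j n)` of a theta series; in use `ε` is `1` or `-1`. -/
noncomputable def tm (q ε : ℂ) (s j n : ℤ) : ℂ := ε ^ n * q ^ (s * n ^ 2 + j * n)

/-- The theta series `∑ ε ^ n q ^ (s n² + j n)` over all integers `n`. -/
noncomputable def th (q ε : ℂ) (s j : ℤ) : ℂ := ∑' n : ℤ, tm q ε s j n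

lemma norm_tm {q ε : ℂ} (hε : ‖ε‖ = 1) (s j n : ℤ) :
    ‖tm q ε s j n‖ = ‖q‖ ^ (s * n ^ 2 + j * n) := by
  simp [tm, hε]

lemma summable_norm_tm {q ε : ℂ} (h0 : q ≠ 0) (hq : ‖q‖ < 1) (hε : ‖ε‖ = 1) {s : ℤ} (hs : 0 < s)
    (j : ℤ) : Summable (fun n : ℤ => ‖tm q ε s j n‖) := by
  have hr : 0 < ‖q‖ := norm_pos_iff.mpr h0
  have hgeo : Summable (fun n : ℤ => ‖q‖ ^ n.natAbs) := by
    rw [summable_int_iff_summable_nat_and_neg]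
    simpa using summable_geometric_of_lt_one (norm_nonneg q) hq
  refine Summable.of_nonneg_of_le (fun n => norm_nonneg _) (fun n => ?_)
    (hgeo.mul_left (‖q‖ ^ (-(|j| + 1) ^ 2)))
  rw [norm_tm hε, ← zpow_natCast, ← zpow_add₀ hr.ne']
  refine zpow_le_zpow_right_of_le_one₀ hr hq.le ?_
  rw [Int.natCast_natAbs]
  -- `(|n| - (|j| + 1))² ≥ 0` and `|j n| ≤ |j| |n|` make `|n| - (|j| + 1)²` a lower bound
  have h1 : -(|j| * |n|) ≤ j * n := by rw [← abs_mul]; exact neg_abs_le _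
  have h2 : |n| ^ 2 ≤ s * n ^ 2 := by rw [sq_abs]; nlinarith [sq_nonneg n]
  nlinarith [abs_nonneg n, abs_nonneg j, sq_nonneg (|n| - (|j| + 1)), mul_nonneg (abs_nonneg n) (abs_nonneg j)]

/-! ### Infinite products -/

lemma qp_summable {a p : ℂ} (hp : ‖p‖ < 1) : Summable (fun k : ℕ => ‖-(a * p ^ k)‖) := by
  simpa using (summable_geometric_of_lt_one (norm_nonneg p) hp).mul_left ‖a‖

lemma qp_tendsto (a : ℂ) {p : ℂ} (hp : ‖p‖ < 1) :
    Tendsto (fun n => ∏ k ∈ Finset.range n, (1 - a * p ^ k)) atTop (𝓝 (qp a p)) := by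
  have := (multipliable_one_add_of_summable (qp_summable (a := a) hp)).tendsto_prod_tprod_nat
  simpa only [← sub_eq_add_neg, qp] using this

lemma qp_ne_zero {a p : ℂ} (ha : ‖a‖ < 1) (hp : ‖p‖ < 1) : qp a p ≠ 0 := by
  have := tprod_one_add_ne_zero_of_summable (f := fun k : ℕ => -(a * p ^ k)) (fun k => ?_)
    (qp_summable hp)
  · simpa only [← sub_eq_add_neg, qp] using this
  · rw [← sub_eq_add_neg, sub_ne_zero]
    intro h
    have h1 : ‖a * p ^ k‖ < 1 := by
      rw [norm_mul, norm_pow]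
      exact mul_lt_one_of_nonneg_of_lt_one_left (norm_nonneg _) ha
        (pow_le_one₀ (norm_nonneg _) hp.le)
    rw [← h] at h1
    simp at h1

/-- Splitting the index set `ℕ` into residue classes modulo `m`. -/
lemma qp_split (m : ℕ) (hm : 0 < m) (a : ℂ) {p : ℂ} (hp : ‖p‖ < 1) :
    qp a p = ∏ r ∈ Finset.range m, qp (a * p ^ r) (p ^ m) := by
  have hpm : ‖p ^ m‖ < 1 := by rw [norm_pow]; exact pow_lt_one₀ (norm_nonneg _) hp hm.ne'
  have h1 := (qp_tendsto a hp).comp (tendsto_id.const_mul_atTop' hm : Tendsto (fun n => m * n) _ _)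
  have h2 := tendsto_finsetProd (Finset.range m) (fun r _ => qp_tendsto (a * p ^ r) hpm)
  refine tendsto_nhds_unique h1 (h2.congr fun n => ?_)
  rw [Finset.prod_comm]
  simp only [Function.comp]
  induction n with
  | zero => simp
  | succ n ih =>
    rw [Finset.prod_range_succ, ih, mul_add_one, Finset.prod_range_add]
    congr 1
    refine Finset.prod_congr rfl fun r _ => ?_
    rw [pow_add, pow_mul]; ring

/-! ### The Jacobi triple product -/

/-- The Gaussian binomial coefficient, defined through the `q`-Pascal recursion. -/
def gb (p : ℂ) : ℕ → ℕ → ℂ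
  | _, 0 => 1
  | 0, _ + 1 => 0
  | M + 1, j + 1 => gb p M j + p ^ (j + 1) * gb p M (j + 1)

/-- The finite product `(p; p)_n = (1 - p) ⋯ (1 - p ^ n)`. -/
def pf (p : ℂ) (n : ℕ) : ℂ := ∏ k ∈ Finset.range n, (1 - p * p ^ k)

lemma pf_succ (p : ℂ) (n : ℕ) : pf p (n + 1) = pf p n * (1 - p ^ (n + 1)) := by
  rw [pf, Finset.prod_range_succ, ← pf, pow_succ']

lemma gb_eq_zero (p : ℂ) : ∀ M j : ℕ, M < j → gb p M j = 0
  | _, 0, h => by omega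
  | 0, _ + 1, _ => by simp [gb]
  | M + 1, j + 1, h => by
    rw [gb, gb_eq_zero p M j (by omega), gb_eq_zero p M (j + 1) (by omega)]; simp

lemma gb_self (p : ℂ) (M : ℕ) : gb p M M = 1 := by
  induction M with
  | zero => simp [gb]
  | succ M ih => rw [gb, ih, gb_eq_zero p M (M + 1) (by omega)]; simp

lemma gb_mul (p : ℂ) : ∀ n j k : ℕ, j + k = n → gb p n j * pf p j * pf p k = pf p n
  | n, 0, k, h => by
    obtain rfl : k = n := by omega
    cases k <;> simp [gb, pf]
  | n, j + 1, 0, h => by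
    obtain rfl : j + 1 = n := by omega
    rw [gb_self]; simp [pf]
  | 0, j + 1, k + 1, h => by omega
  | n + 1, j + 1, k + 1, h => by
    have h1 := gb_mul p n j (k + 1) (by omega)
    have h2 := gb_mul p n (j + 1) k (by omega)
    have h3 : n + 1 = (j + 1) + (k + 1) := by omega
    rw [gb, pf_succ p n, h3, pow_add]
    rw [pf_succ p j] at h2 ⊢
    rw [pf_succ p k] at h1 ⊢
    linear_combination (1 - p ^ (j + 1)) * h1 + p ^ (j + 1) * (1 - p ^ (k + 1)) * h2

/-- The finite `q`-binomial theorem. -/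
lemma q_binomial (p : ℂ) (M : ℕ) (z : ℂ) :
    ∏ k ∈ Finset.range M, (1 + z * p ^ k) =
      ∑ j ∈ Finset.range (M + 1), gb p M j * p ^ (j.choose 2) * z ^ j := by
  induction M generalizing z with
  | zero => simp [gb]
  | succ M ih =>
    rw [Finset.prod_range_succ']
    have h1 : ∀ k, 1 + z * p ^ (k + 1) = 1 + (z * p) * p ^ k := fun k => by ring
    rw [Finset.prod_congr rfl fun k _ => h1 k, ih, Finset.sum_range_succ' _ (M + 1)]
    have h2 : ∀ j, gb p (M + 1) (j + 1) * p ^ ((j + 1).choose 2) * z ^ (j + 1) =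
        z * (gb p M j * p ^ (j.choose 2) * (z * p) ^ j) +
        gb p M (j + 1) * p ^ ((j + 1).choose 2) * (z * p) ^ (j + 1) := fun j => by
      have : (j + 1).choose 2 = j + j.choose 2 := by
        rw [Nat.choose_succ_succ' j 1, Nat.choose_one_right]
      rw [gb, this, pow_add]; ring
    rw [Finset.sum_congr rfl fun j _ => h2 j, Finset.sum_add_distrib, ← Finset.mul_sum]
    have h3 := Finset.sum_range_succ' (fun j => gb p M j * p ^ (j.choose 2) * (z * p) ^ j) (M + 1)
    rw [Finset.sum_range_succ, gb_eq_zero p M (M + 1) (by omega)] at h3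
    have h4 : gb p M 0 = 1 := by simp [gb]
    have h5 : gb p (M + 1) 0 = 1 := by simp [gb]
    rw [h4] at h3
    rw [h5]
    simp only [pow_zero, Nat.choose_zero_succ, mul_one, zero_mul, add_zero] at h3 ⊢
    linear_combination h3

/-- The finite form of the triple product: the `q`-binomial theorem with `M = 2N` factors, centred
at its middle term. -/
lemma finite_triple {q : ℂ} (h0 : q ≠ 0) (s a b : ℕ) (hab : a + b = 2 * s) (N : ℕ) :
    (∏ k ∈ Finset.range N, (1 - q ^ a * (q ^ (2 * s)) ^ k)) *
      (∏ k ∈ Finset.range N, (1 - q ^ b * (q ^ (2 * s)) ^ k)) =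
    ∑ i ∈ Finset.range (2 * N + 1), gb (q ^ (2 * s)) (2 * N) i * tm q (-1) s (a - s) (i - N) := by
  set p := q ^ (2 * s) with hp
  have hpz : p = q ^ (2 * (s : ℤ)) := by rw [hp, ← zpow_natCast]; push_cast; rfl
  have hb : (b : ℤ) = 2 * s - a := by omega
  have key := q_binomial p (2 * N) (-(q ^ ((a : ℤ) - 2 * s * N)))
  have hc : (q : ℂ) ^ (-((s : ℤ) * N ^ 2 - (a - s) * N)) ≠ 0 := zpow_ne_zero _ h0
  have hlhs : ∏ k ∈ Finset.range (2 * N), (1 + -(q ^ ((a : ℤ) - 2 * s * N)) * p ^ k) =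
      (-1) ^ N * q ^ (-((s : ℤ) * N ^ 2 - (a - s) * N)) *
      ((∏ k ∈ Finset.range N, (1 - q ^ a * p ^ k)) *
      (∏ k ∈ Finset.range N, (1 - q ^ b * p ^ k))) := by
    rw [two_mul, Finset.prod_range_add, mul_comm]
    have e1 : ∀ k ∈ Finset.range N, (1 + -(q ^ ((a : ℤ) - 2 * s * N)) * p ^ (N + k)) =
        1 - q ^ a * p ^ k := fun k _ => by
      rw [hpz, ← zpow_natCast, ← zpow_natCast, ← zpow_natCast, ← zpow_mul, ← zpow_mul, neg_mul,
        ← zpow_add₀ h0, ← zpow_add₀ h0, ← sub_eq_add_neg]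
      congr 2; push_cast; ring
    rw [Finset.prod_congr rfl e1]
    have e2 : ∏ k ∈ Finset.range N, (1 + -(q ^ ((a : ℤ) - 2 * s * N)) * p ^ k) =
        (-1) ^ N * q ^ (-((s : ℤ) * N ^ 2 - (a - s) * N)) *
          ∏ k ∈ Finset.range N, (1 - q ^ b * p ^ k) := by
      rw [← Finset.prod_range_reflect]
      have e3 : ∀ M : ℕ, (-1) ^ M * q ^ (-((s : ℤ) * M ^ 2 - (a - s) * M)) *
          ∏ k ∈ Finset.range M, (1 - q ^ b * p ^ k) =
          ∏ k ∈ Finset.range M, (1 - q ^ (-((b : ℤ) + 2 * s * k))) := fun M => by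
        induction M with
        | zero => simp
        | succ M ih =>
          rw [Finset.prod_range_succ, Finset.prod_range_succ, ← ih]
          have e4 : (q : ℂ) ^ (-((s : ℤ) * ((M + 1 : ℕ) : ℤ) ^ 2 - (a - s) * (M + 1 : ℕ))) =
              q ^ (-((s : ℤ) * M ^ 2 - (a - s) * M)) * q ^ (-((b : ℤ) + 2 * s * M)) := by
            rw [← zpow_add₀ h0]; congr 1; rw [hb]; push_cast; ring
          have e5 : q ^ b * p ^ M = (q ^ (-((b : ℤ) + 2 * s * M)))⁻¹ := by
            rw [← zpow_neg, hpz, ← zpow_natCast, ← zpow_natCast, ← zpow_mul, ← zpow_add₀ h0]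
            congr 1; ring
          have e6 : (q : ℂ) ^ (-((b : ℤ) + 2 * s * M)) ≠ 0 := zpow_ne_zero _ h0
          rw [e4, e5, pow_succ]
          field_simp
          ring
      rw [e3]
      refine Finset.prod_congr rfl fun k hk => ?_
      rw [Finset.mem_range] at hk
      rw [neg_mul, ← sub_eq_add_neg, hpz, ← zpow_natCast, ← zpow_mul, ← zpow_add₀ h0]
      congr 2
      have : ((N - 1 - k : ℕ) : ℤ) = N - 1 - k := by omega
      rw [this, hb]; ring
    rw [e2]; ring
  rw [hlhs] at key
  have h1 : ((-1 : ℂ) ^ N * q ^ (-((s : ℤ) * N ^ 2 - (a - s) * N))) ≠ 0 :=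
    mul_ne_zero (pow_ne_zero _ (by norm_num)) hc
  apply mul_left_cancel₀ h1
  rw [key, Finset.mul_sum]
  refine Finset.sum_congr rfl fun i _ => ?_
  have h2 : p ^ (i.choose 2) = q ^ ((s : ℤ) * (i * (i - 1))) := by
    have h3 : ((i.choose 2 : ℕ) : ℤ) * 2 = i * (i - 1) := by
      clear * -
      induction i with
      | zero => simp
      | succ i ih =>
        rw [Nat.choose_succ_succ' i 1, Nat.choose_one_right]; push_cast; linarith
    rw [hpz, ← zpow_natCast, ← zpow_mul, ← h3]; congr 1; ring
  have h4 : (-1 : ℂ) ^ i = (-1) ^ N * (-1) ^ ((i : ℤ) - N) := by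
    rw [← zpow_natCast, ← zpow_natCast, ← zpow_add₀ (by norm_num)]; congr 1; ring
  rw [tm, h2, neg_pow, h4, ← zpow_natCast (q ^ _), ← zpow_mul]
  have h5 : q ^ ((s : ℤ) * (i * (i - 1))) * q ^ (((a : ℤ) - 2 * s * N) * i) =
      q ^ (-((s : ℤ) * N ^ 2 - (a - s) * N)) *
        q ^ ((s : ℤ) * ((i : ℤ) - N) ^ 2 + (a - s) * ((i : ℤ) - N)) := by
    rw [← zpow_add₀ h0, ← zpow_add₀ h0]; congr 1; ring
  linear_combination gb p (2 * N) i * (-1) ^ N * (-1) ^ ((i : ℤ) - N) * h5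

lemma exists_pf_bounds {p : ℂ} (hp : ‖p‖ < 1) :
    ∃ C : ℝ, ∀ n, ‖pf p n‖ ≤ C ∧ ‖(pf p n)⁻¹‖ ≤ C := by
  have h1 : Tendsto (pf p) atTop (𝓝 (qp p p)) := qp_tendsto p hp
  have h2 := h1.inv₀ (qp_ne_zero hp hp)
  obtain ⟨C1, hC1⟩ := (Metric.isBounded_range_of_tendsto _ h1).exists_norm_le
  obtain ⟨C2, hC2⟩ := (Metric.isBounded_range_of_tendsto _ h2).exists_norm_le
  exact ⟨max C1 C2, fun n => ⟨(hC1 _ ⟨n, rfl⟩).trans (le_max_left _ _),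
    (hC2 _ ⟨n, rfl⟩).trans (le_max_right _ _)⟩⟩

lemma pf_ne_zero {p : ℂ} (hp : ‖p‖ < 1) (n : ℕ) : pf p n ≠ 0 := by
  refine Finset.prod_ne_zero_iff.mpr fun k _ => ?_
  rw [sub_ne_zero, ← pow_succ']
  intro h
  have h1 : ‖p ^ (k + 1)‖ < 1 := by
    rw [norm_pow]; exact pow_lt_one₀ (norm_nonneg _) hp (by omega)
  rw [← h] at h1
  simp at h1

lemma gb_eq {p : ℂ} (hp : ‖p‖ < 1) {n j k : ℕ} (h : j + k = n) :
    gb p n j = pf p n * (pf p j)⁻¹ * (pf p k)⁻¹ := by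
  have := gb_mul p n j k h
  have h1 := pf_ne_zero hp j
  have h2 := pf_ne_zero hp k
  field_simp
  linear_combination this

/-- **Jacobi triple product**, for the theta series `∑ (-1) ^ n q ^ (s n² + (a - s) n)`: the limit
of its finite form, by dominated convergence. -/
theorem triple_product {q : ℂ} (h0 : q ≠ 0) (hq : ‖q‖ < 1) (s a b : ℕ) (hs : 0 < s)
    (hab : a + b = 2 * s) :
    th q (-1) s (a - s) =
      qp (q ^ (2 * s)) (q ^ (2 * s)) * qp (q ^ a) (q ^ (2 * s)) * qp (q ^ b) (q ^ (2 * s)) := by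
  set p := q ^ (2 * s) with hpdef
  have hp : ‖p‖ < 1 := by rw [hpdef, norm_pow]; exact pow_lt_one₀ (norm_nonneg _) hq (by omega)
  obtain ⟨C, hC⟩ := exists_pf_bounds hp
  have hC0 : 0 ≤ C := (norm_nonneg _).trans (hC 0).1
  let g : ℕ → ℤ → ℂ := fun N n =>
    if n.natAbs ≤ N then gb p (2 * N) (N + n).toNat * tm q (-1) s (a - s) n else 0
  have hpf : Tendsto (pf p) atTop (𝓝 (qp p p)) := qp_tendsto p hp
  have hne := qp_ne_zero hp hp
  have hsum : ∀ N, ∑' n, g N n = (∏ k ∈ Finset.range N, (1 - q ^ a * p ^ k)) *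
      (∏ k ∈ Finset.range N, (1 - q ^ b * p ^ k)) := fun N => by
    rw [finite_triple h0 s a b hab N, tsum_eq_sum (s := Finset.Icc (-(N : ℤ)) N)]
    · symm
      refine Finset.sum_nbij' (fun i => (i : ℤ) - N) (fun n => (N + n).toNat) ?_ ?_ ?_ ?_ ?_
      · intro i hi; simp only [Finset.mem_range, Finset.mem_Icc] at *; omega
      · intro i hi; simp only [Finset.mem_range, Finset.mem_Icc] at *; omega
      · intro i hi; omega
      · intro i hi; simp only [Finset.mem_Icc] at *; omega
      · intro i hi
        simp only [Finset.mem_range] at hi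
        have h1 : ((i : ℤ) - N).natAbs ≤ N := by omega
        have h2 : ((N : ℤ) + (i - N)).toNat = i := by omega
        simp only [g, h1, h2, if_true, hpdef]
    · intro n hn
      have : ¬ n.natAbs ≤ N := by simp only [Finset.mem_Icc] at hn; omega
      simp [g, this]
  have hlim : Tendsto (fun N => ∑' n, g N n) atTop
      (𝓝 (∑' n, (qp p p)⁻¹ * tm q (-1) s (a - s) n)) := by
    refine tendsto_tsum_of_dominated_convergence
      (bound := fun n => C * C * C * ‖tm q (-1) s (a - s) n‖) ?_ ?_ ?_
    · exact (summable_norm_tm h0 hq (by simp) (by exact_mod_cast hs) _).mul_left _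
    · intro n
      have t1 : Tendsto (fun N : ℕ => 2 * N) atTop atTop := tendsto_id.const_mul_atTop' (by norm_num)
      have t2 : ∀ m : ℤ, Tendsto (fun N : ℕ => (N + m).toNat) atTop atTop := fun m => by
        refine tendsto_atTop.mpr fun B => ?_
        filter_upwards [eventually_ge_atTop (B + m.natAbs)] with N hN
        omega
      have t3 := ((hpf.comp t1).mul ((hpf.comp (t2 n)).inv₀ hne)).mul
        ((hpf.comp (t2 (-n))).inv₀ hne)
      rw [mul_inv_cancel₀ hne, one_mul] at t3
      refine (t3.mul_const (tm q (-1) s (a - s) n)).congr' ?_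
      filter_upwards [eventually_ge_atTop n.natAbs] with N hN
      simp only [g, hN, if_true, Function.comp]
      rw [gb_eq hp (k := (N + -n).toNat) (by omega)]
    · refine Eventually.of_forall fun N n => ?_
      by_cases h : n.natAbs ≤ N
      · simp only [g, h, if_true]
        rw [gb_eq hp (k := (N + -n).toNat) (by omega), norm_mul, norm_mul, norm_mul]
        gcongr
        · exact (hC _).1
        · exact (hC _).2
        · exact (hC _).2
      · simp only [g, h, if_false, norm_zero]; positivity
  simp only [hsum] at hlim
  have := tendsto_nhds_unique hlim ((qp_tendsto (q ^ a) hp).mul (qp_tendsto (q ^ b) hp))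
  rw [tsum_mul_left] at this
  rw [th, mul_assoc, ← this, mul_inv_cancel_left₀ hne]

/-! ### Products of two theta series -/

lemma th_mul_th {q ε δ : ℂ} (h0 : q ≠ 0) (hq : ‖q‖ < 1) (hε : ‖ε‖ = 1) (hδ : ‖δ‖ = 1) {s : ℤ}
    (hs : 0 < s) (i j : ℤ) :
    th q ε s i * th q δ s j = ∑' z : ℤ × ℤ, tm q ε s i z.1 * tm q δ s j z.2 :=
  tsum_mul_tsum_of_summable_norm (summable_norm_tm h0 hq hε hs i) (summable_norm_tm h0 hq hδ hs j)

lemma summable_tm_mul {q ε δ : ℂ} (h0 : q ≠ 0) (hq : ‖q‖ < 1) (hε : ‖ε‖ = 1) (hδ : ‖δ‖ = 1) {s : ℤ}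
    (hs : 0 < s) (i j : ℤ) :
    Summable (fun z : ℤ × ℤ => tm q ε s i z.1 * tm q δ s j z.2) :=
  summable_mul_of_summable_norm (summable_norm_tm h0 hq hε hs i) (summable_norm_tm h0 hq hδ hs j)

lemma th_neg (q : ℂ) (s j : ℤ) : th q (-1) s (-j) = th q (-1) s j := by
  rw [th, th, ← (Equiv.neg ℤ).tsum_eq]
  refine tsum_congr fun n => ?_
  simp only [tm, Equiv.neg_apply]
  rw [zpow_neg, ← inv_zpow]
  norm_num

lemma th_shift {q ε : ℂ} (h0 : q ≠ 0) (hε : ε ≠ 0) (s j : ℤ) :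
    th q ε s j = ε * q ^ (s + j) * th q ε s (j + 2 * s) := by
  rw [th, th, ← tsum_mul_left, ← (Equiv.addRight (1 : ℤ)).tsum_eq]
  refine tsum_congr fun n => ?_
  simp only [tm, Equiv.coe_addRight]
  have : q ^ (s * (n + 1) ^ 2 + j * (n + 1)) = q ^ (s + j) * q ^ (s * n ^ 2 + (j + 2 * s) * n) := by
    rw [← zpow_add₀ h0]; congr 1; ring
  rw [this, zpow_add_one₀ hε]; ring

/-- Partition of `ℤ²` into the five cosets of the lattice spanned by `(2, 1)` and `(-1, 2)`, with
representatives `(r - 2, 0)`. -/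
def e5 : Fin 5 × (ℤ × ℤ) ≃ ℤ × ℤ where
  toFun w := (2 * w.2.1 - w.2.2 + ((w.1 : ℕ) - 2), w.2.1 + 2 * w.2.2)
  invFun z := (⟨((z.1 - 2 * z.2 + 2) % 5).toNat, by omega⟩,
    (z.2 + 2 * ((z.1 - 2 * z.2 + 2) / 5), -((z.1 - 2 * z.2 + 2) / 5)))
  left_inv := by
    rintro ⟨r, k, l⟩
    have := r.2
    simp only [Prod.mk.injEq, Fin.ext_iff]
    omega
  right_inv := by
    rintro ⟨m, n⟩
    simp only [Prod.mk.injEq]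
    omega

/-- Partition of `ℤ²` according to the parity of the sum of the coordinates. -/
def e2 : (ℤ × ℤ) ⊕ (ℤ × ℤ) ≃ ℤ × ℤ where
  toFun w := w.elim (fun z => (z.1 + z.2, z.1 - z.2)) (fun z => (z.1 + z.2 + 1, z.1 - z.2))
  invFun z := if (z.1 + z.2) % 2 = 0 then .inl ((z.1 + z.2) / 2, (z.1 - z.2) / 2)
    else .inr ((z.1 + z.2) / 2, (z.1 - z.2) / 2)
  left_inv := by
    rintro (⟨k, l⟩ | ⟨k, l⟩)
    · have h : (k + l + (k - l)) % 2 = 0 := by omega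
      simp only [Sum.elim_inl, h, if_true, Sum.inl.injEq, Prod.mk.injEq]
      omega
    · have h : ¬ (k + l + 1 + (k - l)) % 2 = 0 := by omega
      simp only [Sum.elim_inr, h, if_false, Sum.inr.injEq, Prod.mk.injEq]
      omega
  right_inv := by
    rintro ⟨m, n⟩
    by_cases h : (m + n) % 2 = 0
    · simp only [h, if_true, Sum.elim_inl, Prod.mk.injEq]
      omega
    · simp only [h, if_false, Sum.elim_inr, Prod.mk.injEq]
      omega

/-- Up to the factor `q ^ x`, a product of two theta series is an alternating rank-two form in
`(x, y)`, namely `α(x) β(y) - β(x) α(y)`, so these products obey the Plücker relation, which is Weierstrass's three-term theta identity. -/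
lemma weierstrass {q : ℂ} (h0 : q ≠ 0) (hq : ‖q‖ < 1) {s : ℤ} (hs : 0 < s) (x y : ℤ) :
    th q (-1) s (x + y - s) * th q (-1) s (x - y - s) =
      q ^ x * ((q ^ x * th q 1 (2 * s) (2 * x + 2 * s)) * th q 1 (2 * s) (2 * y) -
        th q 1 (2 * s) (2 * x) * (q ^ y * th q 1 (2 * s) (2 * y + 2 * s))) := by
  have n1 : ‖(-1 : ℂ)‖ = 1 := by simp
  have n2 : ‖(1 : ℂ)‖ = 1 := by simp
  have hs2 : 0 < 2 * s := by omega
  have sm := summable_tm_mul h0 hq n1 n1 hs (x + y - s) (x - y - s)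
  have sm' : Summable (fun w => tm q (-1) s (x + y - s) (e2 w).1 *
      tm q (-1) s (x - y - s) (e2 w).2) := e2.summable_iff.mpr sm
  rw [th_mul_th h0 hq n1 n1 hs, ← e2.tsum_eq, Summable.tsum_sum
    (sm'.comp_injective Sum.inl_injective) (sm'.comp_injective Sum.inr_injective)]
  have a1 : ∀ z : ℤ × ℤ, tm q (-1) s (x + y - s) (e2 (.inl z)).1 *
      tm q (-1) s (x - y - s) (e2 (.inl z)).2 =
      tm q 1 (2 * s) (2 * x - 2 * s) z.1 * tm q 1 (2 * s) (2 * y) z.2 := fun z => by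
    obtain ⟨k, l⟩ := z
    simp only [e2, Equiv.coe_fn_mk, Sum.elim_inl, tm, one_zpow, one_mul]
    rw [mul_mul_mul_comm, ← zpow_add₀ (by norm_num), ← zpow_add₀ h0, ← zpow_add₀ h0,
      Even.neg_one_zpow ⟨k, by ring⟩, one_mul]
    congr 1; ring
  have a2 : ∀ z : ℤ × ℤ, tm q (-1) s (x + y - s) (e2 (.inr z)).1 *
      tm q (-1) s (x - y - s) (e2 (.inr z)).2 =
      -q ^ (x + y) * (tm q 1 (2 * s) (2 * x) z.1 * tm q 1 (2 * s) (2 * y + 2 * s) z.2) :=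
    fun z => by
    obtain ⟨k, l⟩ := z
    simp only [e2, Equiv.coe_fn_mk, Sum.elim_inr, tm, one_zpow, one_mul]
    rw [mul_mul_mul_comm, ← zpow_add₀ (by norm_num), ← zpow_add₀ h0, ← zpow_add₀ h0,
      Odd.neg_one_zpow ⟨k, by ring⟩, neg_mul, neg_mul, ← zpow_add₀ h0, one_mul]
    congr 2; ring
  rw [tsum_congr a1, tsum_congr a2, tsum_mul_left, ← th_mul_th h0 hq n2 n2 hs2,
    ← th_mul_th h0 hq n2 n2 hs2, th_shift h0 one_ne_zero (2 * s) (2 * x - 2 * s)]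
  have b1 : 2 * x - 2 * s + 2 * (2 * s) = 2 * x + 2 * s := by ring
  have b2 : q ^ (2 * s + (2 * x - 2 * s)) = q ^ x * q ^ x := by
    rw [← zpow_add₀ h0]; congr 1; ring
  rw [b1, b2, zpow_add₀ h0]
  ring

/-- The quadratic form `5 (m² + n²)` is `25 (k² + l²)` in the coordinates of `e5`, so a product of
two theta series splits into five such products. It is a 5-dissection as soon as `u` and `v` are
multiples of 5. -/
lemma dissection {q : ℂ} (h0 : q ≠ 0) (hq : ‖q‖ < 1) (i j u v : ℤ) (hu : 2 * i + j = u)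
    (hv : 2 * j - i = v) :
    th q (-1) 5 i * th q (-1) 5 j = ∑ r : Fin 5, (-1) ^ ((r : ℕ) - 2 : ℤ) *
      q ^ (5 * ((r : ℕ) - 2) ^ 2 + i * ((r : ℕ) - 2) : ℤ) *
      (th q (-1) 25 (u + 20 * ((r : ℕ) - 2)) * th q (-1) 25 (v - 10 * ((r : ℕ) - 2))) := by
  have n1 : ‖(-1 : ℂ)‖ = 1 := by simp
  have sm := summable_tm_mul h0 hq n1 n1 (s := 5) (by norm_num) i j
  have sm' : Summable (fun w => tm q (-1) 5 i (e5 w).1 * tm q (-1) 5 j (e5 w).2) :=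
    e5.summable_iff.mpr sm
  rw [th_mul_th h0 hq n1 n1 (by norm_num), ← e5.tsum_eq, sm'.tsum_prod, tsum_fintype]
  refine Finset.sum_congr rfl fun r _ => ?_
  rw [th_mul_th h0 hq n1 n1 (by norm_num), ← tsum_mul_left]
  refine tsum_congr fun z => ?_
  obtain ⟨k, l⟩ := z
  simp only [e5, Equiv.coe_fn_mk, tm]
  generalize ((r : ℕ) : ℤ) - 2 = ρ
  have e1 : (-1 : ℂ) ^ (2 * k - l + ρ) * (-1) ^ (k + 2 * l) =
      (-1) ^ ρ * ((-1) ^ k * (-1) ^ l) := by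
    simp only [← zpow_add₀ (show (-1 : ℂ) ≠ 0 by norm_num)]
    rw [show 2 * k - l + ρ + (k + 2 * l) = ρ + (k + l) + (k + k) by ring,
      zpow_add₀ (by norm_num) (ρ + (k + l)), Even.neg_one_zpow ⟨k, rfl⟩, mul_one]
  have e2 : q ^ (5 * (2 * k - l + ρ) ^ 2 + i * (2 * k - l + ρ)) *
      q ^ (5 * (k + 2 * l) ^ 2 + j * (k + 2 * l)) = q ^ (5 * ρ ^ 2 + i * ρ) *
      (q ^ (25 * k ^ 2 + (u + 20 * ρ) * k) * q ^ (25 * l ^ 2 + (v - 10 * ρ) * l)) := by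
    simp only [← zpow_add₀ h0]
    rw [← hu, ← hv]
    congr 1; ring
  rw [mul_mul_mul_comm, e1, e2]
  ring

/-! ### Relations between theta series of base `q ^ 50` -/

/-- The three-term relations among the theta series `∑ (-1) ^ n q ^ (25 n² + j n)` with
`j = 20, 15, 10, 5, 0`, each an instance of the Plücker relation behind `weierstrass`. -/
lemma three_term {q : ℂ} (h0 : q ≠ 0) (hq : ‖q‖ < 1) {A B C E F : ℂ} (hA : th q (-1) 25 20 = A)
    (hB : th q (-1) 25 15 = B) (hC : th q (-1) 25 10 = C) (hE : th q (-1) 25 5 = E)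
    (hF : th q (-1) 25 0 = F) :
    C * (C ^ 2 * F - q ^ 10 * A ^ 3) = B * E ^ 3 ∧
    A * (C ^ 3 + q ^ 5 * A ^ 2 * F) = B ^ 3 * E ∧
    A * C * (F ^ 2 + q ^ 5 * A * C) = B ^ 2 * E ^ 2 := by
  have w := weierstrass h0 hq (s := 25) (by norm_num)
  have w1 := w 5 0
  have w2 := w 10 0
  have w3 := w 15 0
  have w4 := w 20 0
  have w5 := w 10 5
  have w6 := w 15 5
  have w7 := w 20 5
  have w8 := w 15 10
  have w9 := w 20 10
  have w10 := w 20 15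
  norm_num [th_neg, zpow_ofNat, hA, hB, hC, hE, hF] at w1 w2 w3 w4 w5 w6 w7 w8 w9 w10
  have k1 : (F * C) * (C * C) - q ^ 10 * ((C * A) * (A * A)) = (E * E) * (E * B) := by
    rw [w7, w3, w10, w1, w4, w6]; ring
  have k2 : (C * C) * (C * A) + q ^ 5 * ((F * A) * (A * A)) = (E * B) * (B * B) := by
    rw [w3, w5, w8, w1, w6, w2]; ring
  have k3 : (F * A) * (F * C) + q ^ 5 * ((C * A) * (C * A)) = (E * B) * (E * B) := by
    nth_rewrite 1 [w8, w7, w10, w5, w6, w9]; ring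
  exact ⟨by linear_combination k1, by linear_combination k2, by linear_combination k3⟩

/-- The 5-dissection of `(q¹⁰; q¹⁰)² [q][q³]`, where `[x] = (x, q¹⁰/x; q¹⁰)`; the two theta series on
the left are `(q¹⁰; q¹⁰) [q]` and `(q¹⁰; q¹⁰) [q³]`. -/
lemma dissect_one_three {q : ℂ} (h0 : q ≠ 0) (hq : ‖q‖ < 1) {A C F : ℂ}
    (hA : th q (-1) 25 20 = A) (hC : th q (-1) 25 10 = C)
    (hF : th q (-1) 25 0 = F) :
    th q (-1) 5 (-4) * th q (-1) 5 (-2) =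
      C * F - q * C ^ 2 - q ^ 3 * A * F + q ^ 4 * A * C - q ^ 7 * A ^ 2 := by
  have d := dissection h0 hq (-4) (-2) (-10) 0 (by norm_num) (by norm_num)
  have s1 := th_shift (ε := -1) h0 (by norm_num) 25 (-30)
  have s2 := th_shift (ε := -1) h0 (by norm_num) 25 (-50)
  rw [d]
  norm_num [th_neg, hA, hC, hF, Fin.sum_univ_five] at s1 s2 ⊢
  rw [s1, s2]
  field_simp
  ring

/-- The 5-dissection of `(q¹⁰; q¹⁰)² [q²][q]`. The class of `q⁴` is absent because its coefficient
contains the vanishing theta series `th q (-1) 25 25`. -/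
lemma dissect_one_two {q : ℂ} (h0 : q ≠ 0) (hq : ‖q‖ < 1) {A B C E F : ℂ}
    (hA : th q (-1) 25 20 = A) (hB : th q (-1) 25 15 = B)
    (hC : th q (-1) 25 10 = C) (hE : th q (-1) 25 5 = E)
    (hF : th q (-1) 25 0 = F) :
    th q (-1) 5 (-3) * th q (-1) 5 (-4) =
      C * E - q * F * B - q ^ 2 * C * B + q ^ 3 * A * E := by
  have d := dissection h0 hq (-3) (-4) (-10) (-5) (by norm_num) (by norm_num)
  have s0 := th_shift (ε := -1) h0 (by norm_num) 25 (-25)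
  have s1 := th_shift (ε := -1) h0 (by norm_num) 25 (-30)
  have s2 := th_shift (ε := -1) h0 (by norm_num) 25 (-50)
  rw [d]
  norm_num [th_neg, hA, hB, hC, hE, hF, Fin.sum_univ_five] at s0 s1 s2 ⊢
  have s3 : th q (-1) 25 25 = 0 := by linear_combination s0 / 2
  rw [s1, s2, s3]
  field_simp
  ring

/-! ### The identity -/

lemma qp_split_two {q : ℂ} (hq : ‖q‖ < 1) (a b : ℕ) (hb : b ≠ 0) :
    qp (q ^ a) (q ^ b) = qp (q ^ a) (q ^ (2 * b)) * qp (q ^ (a + b)) (q ^ (2 * b)) := by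
  have hp : ‖q ^ b‖ < 1 := by rw [norm_pow]; exact pow_lt_one₀ (norm_nonneg _) hq hb
  rw [qp_split 2 (by norm_num) _ hp, Finset.prod_range_succ, Finset.prod_range_one,
    pow_zero, mul_one, pow_one, ← pow_add, ← pow_mul, mul_comm b]

/-- The dissections of `[q][q³]` and `[q][q²]` are multiplied together, where `[x] = (x, q¹⁰/x; q¹⁰)`;
each residue class modulo 5 of the product is then evaluated by the three-term relations `t1`, `t2`,
`t3`. -/
lemma combine {q A B C D E F v1 v2 v3 v7 v8 v9 : ℂ} (nD : D ≠ 0) (nA : A ≠ 0) (nB : B ≠ 0)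
    (nC : C ≠ 0) (nE : E ≠ 0)
    (t1 : C * (C ^ 2 * F - q ^ 10 * A ^ 3) = B * E ^ 3)
    (t2 : A * (C ^ 3 + q ^ 5 * A ^ 2 * F) = B ^ 3 * E)
    (t3 : A * C * (F ^ 2 + q ^ 5 * A * C) = B ^ 2 * E ^ 2)
    (key : B * E / D * v1 * v9 * (B * E / D * v3 * v7) *
        (B * E / D * v2 * v8 * (B * E / D * v1 * v9)) =
      (C * F - q * C ^ 2 - q ^ 3 * A * F + q ^ 4 * A * C - q ^ 7 * A ^ 2) *
        (C * E - q * F * B - q ^ 2 * C * B + q ^ 3 * A * E)) :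
    (v1 * v9) ^ 2 * (v2 * v8) * (v3 * v7) =
      D ^ 2 / (B * C) * (D / B) ^ 2 - 2 * q * (D ^ 2 / (A * E)) * (D / B) * (D / E) +
        q ^ 3 * (D ^ 2 / (A * E)) * (D / E) ^ 2 + q ^ 4 * (D ^ 2 / (B * C)) * (D / E) ^ 2 := by
  -- the class 2 modulo 5 contributes nothing: its terms cancel identically
  have key2 : (v1 * v9) ^ 2 * (v2 * v8) * (v3 * v7) * (B * E / D) ^ 4 * (A * C) =
      A * B * E ^ 4 - 2 * q * B ^ 3 * C * E ^ 2 + q ^ 3 * B ^ 4 * C * E +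
        q ^ 4 * A * B ^ 3 * E ^ 2 := by
    linear_combination A * C * key + (A * E) * t1 + (q ^ 3 * B * C - q * C * E) * t2 +
      (q ^ 4 * A * B - q * B * C) * t3
  generalize (v1 * v9) ^ 2 * (v2 * v8) * (v3 * v7) = y at *
  have hy : y = (A * B * E ^ 4 - 2 * q * B ^ 3 * C * E ^ 2 + q ^ 3 * B ^ 4 * C * E +
        q ^ 4 * A * B ^ 3 * E ^ 2) * D ^ 4 / (B ^ 4 * E ^ 4 * (A * C)) := by
    rw [← key2]; field_simp
  rw [hy]
  field_simp

theorem stmt14 (q : ℂ) (hq : ‖q‖ < 1) :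
    HH (q ^ 2) ^ 2 / (GG q ^ 2 * HH q) =
      HH (q ^ 5) * GG (q ^ 10) ^ 2 - 2 * q * GG (q ^ 5) * GG (q ^ 10) * HH (q ^ 10) +
        q ^ 3 * GG (q ^ 5) * HH (q ^ 10) ^ 2 + q ^ 4 * HH (q ^ 5) * HH (q ^ 10) ^ 2 := by
  -- the theta series use negative powers of `q`, so `q = 0` is treated apart
  rcases eq_or_ne q 0 with rfl | h0
  · simp [GG, HH, qp]
  have pn : ∀ {n : ℕ}, n ≠ 0 → ‖q ^ n‖ < 1 := fun {n} hn => by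
    rw [norm_pow]; exact pow_lt_one₀ (norm_nonneg _) hq hn
  have nz : ∀ a b : ℕ, a ≠ 0 → b ≠ 0 → qp (q ^ a) (q ^ b) ≠ 0 := fun a b ha hb =>
    qp_ne_zero (pn ha) (pn hb)
  -- every product is rewritten to base `q ^ 10` (left side) or `q ^ 50` (right side)
  have p1 : GG q = 1 / (qp (q ^ 1) (q ^ 10) * qp (q ^ 6) (q ^ 10) *
      (qp (q ^ 4) (q ^ 10) * qp (q ^ 9) (q ^ 10))) := by
    have := qp_split_two hq 1 5 (by norm_num)
    rw [GG, qp_split_two hq 4 5 (by norm_num), ← this, pow_one]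
  have p2 : HH q = 1 / (qp (q ^ 2) (q ^ 10) * qp (q ^ 7) (q ^ 10) *
      (qp (q ^ 3) (q ^ 10) * qp (q ^ 8) (q ^ 10))) := by
    rw [HH, qp_split_two hq 2 5 (by norm_num), qp_split_two hq 3 5 (by norm_num)]
  have p3 : HH (q ^ 2) = 1 / (qp (q ^ 4) (q ^ 10) * qp (q ^ 6) (q ^ 10)) := by
    simp only [HH, ← pow_mul]
  have p4 : GG (q ^ 5) = 1 / (qp (q ^ 5) (q ^ 50) * qp (q ^ 30) (q ^ 50) *
      (qp (q ^ 20) (q ^ 50) * qp (q ^ 45) (q ^ 50))) := by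
    simp only [GG, ← pow_mul]
    rw [qp_split_two hq 5 (5 * 5) (by norm_num), qp_split_two hq (5 * 4) (5 * 5) (by norm_num)]
  have p5 : HH (q ^ 5) = 1 / (qp (q ^ 10) (q ^ 50) * qp (q ^ 35) (q ^ 50) *
      (qp (q ^ 15) (q ^ 50) * qp (q ^ 40) (q ^ 50))) := by
    simp only [HH, ← pow_mul]
    rw [qp_split_two hq (5 * 2) (5 * 5) (by norm_num),
      qp_split_two hq (5 * 3) (5 * 5) (by norm_num)]
  have p6 : GG (q ^ 10) = 1 / (qp (q ^ 10) (q ^ 50) * qp (q ^ 40) (q ^ 50)) := by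
    simp only [GG, ← pow_mul]
  have p7 : HH (q ^ 10) = 1 / (qp (q ^ 20) (q ^ 50) * qp (q ^ 30) (q ^ 50)) := by
    simp only [HH, ← pow_mul]
  have p8 : qp (q ^ 10) (q ^ 10) = qp (q ^ 10) (q ^ 50) * qp (q ^ 20) (q ^ 50) *
      qp (q ^ 30) (q ^ 50) * qp (q ^ 40) (q ^ 50) * qp (q ^ 50) (q ^ 50) := by
    rw [qp_split 5 (by norm_num) _ (pn (by norm_num))]
    simp only [Finset.prod_range_succ, Finset.prod_range_zero, ← pow_mul, ← pow_add]
    norm_num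
  have x1 := triple_product h0 hq 5 1 9 (by norm_num) (by norm_num)
  have x2 := triple_product h0 hq 5 2 8 (by norm_num) (by norm_num)
  have x3 := triple_product h0 hq 5 3 7 (by norm_num) (by norm_num)
  have yA := triple_product h0 hq 25 45 5 (by norm_num) (by norm_num)
  have yB := triple_product h0 hq 25 40 10 (by norm_num) (by norm_num)
  have yC := triple_product h0 hq 25 35 15 (by norm_num) (by norm_num)
  have yE := triple_product h0 hq 25 30 20 (by norm_num) (by norm_num)
  norm_num at x1 x2 x3 yA yB yC yE
  have zz := fun n : ℕ => fun hn : n ≠ 0 => nz n 50 hn (by norm_num)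
  have z5 := zz 5 (by norm_num)
  have z10 := zz 10 (by norm_num)
  have z15 := zz 15 (by norm_num)
  have z20 := zz 20 (by norm_num)
  have z30 := zz 30 (by norm_num)
  have z35 := zz 35 (by norm_num)
  have z40 := zz 40 (by norm_num)
  have z45 := zz 45 (by norm_num)
  have z50 := zz 50 (by norm_num)
  obtain ⟨D, hD⟩ : ∃ D, D = qp (q ^ 50) (q ^ 50) := ⟨_, rfl⟩
  obtain ⟨A, hA⟩ : ∃ A, A = th q (-1) 25 20 := ⟨_, rfl⟩
  obtain ⟨B, hB⟩ : ∃ B, B = th q (-1) 25 15 := ⟨_, rfl⟩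
  obtain ⟨C, hC⟩ : ∃ C, C = th q (-1) 25 10 := ⟨_, rfl⟩
  obtain ⟨E, hE⟩ : ∃ E, E = th q (-1) 25 5 := ⟨_, rfl⟩
  obtain ⟨t1, t2, t3⟩ := three_term h0 hq hA.symm hB.symm hC.symm hE.symm rfl
  have d1 := dissect_one_three h0 hq hA.symm hC.symm rfl
  have d2 := dissect_one_two h0 hq hA.symm hB.symm hC.symm hE.symm rfl
  rw [x1, x3] at d1
  rw [x1, x2] at d2
  rw [yA, ← hD] at hA
  rw [yB, ← hD] at hB
  rw [yC, ← hD] at hC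
  rw [yE, ← hD] at hE
  rw [← hD] at z50 p8
  have g5 : GG (q ^ 5) = D ^ 2 / (A * E) := by rw [p4, hA, hE]; field_simp
  have h5 : HH (q ^ 5) = D ^ 2 / (B * C) := by rw [p5, hB, hC]; field_simp
  have g10 : GG (q ^ 10) = D / B := by rw [p6, hB]; field_simp
  have h10 : HH (q ^ 10) = D / E := by rw [p7, hE]; field_simp
  have f10 : qp (q ^ 10) (q ^ 10) = B * E / D := by rw [p8, hB, hE]; field_simp
  have nA : A ≠ 0 := by rw [hA]; exact mul_ne_zero (mul_ne_zero z50 z45) z5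
  have nB : B ≠ 0 := by rw [hB]; exact mul_ne_zero (mul_ne_zero z50 z40) z10
  have nC : C ≠ 0 := by rw [hC]; exact mul_ne_zero (mul_ne_zero z50 z35) z15
  have nE : E ≠ 0 := by rw [hE]; exact mul_ne_zero (mul_ne_zero z50 z30) z20
  have key := congrArg₂ (· * ·) d1 d2
  have lhs : HH (q ^ 2) ^ 2 / (GG q ^ 2 * HH q) =
      (qp (q ^ 1) (q ^ 10) * qp (q ^ 9) (q ^ 10)) ^ 2 *
      (qp (q ^ 2) (q ^ 10) * qp (q ^ 8) (q ^ 10)) *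
      (qp (q ^ 3) (q ^ 10) * qp (q ^ 7) (q ^ 10)) := by
    have w4 := nz 4 10 (by norm_num) (by norm_num)
    have w6 := nz 6 10 (by norm_num) (by norm_num)
    rw [p1, p2, p3]
    generalize qp (q ^ 1) (q ^ 10) = v1
    field_simp
  rw [lhs, g5, h5, g10, h10, pow_one]
  rw [f10] at key
  exact combine z50 nA nB nC nE t1 t2 t3 key
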